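/- arXiv:2008.08739 — 3 statements merged into one kernel-verified Lean document; each statement's English description precedes it below -/
import Mathlib

section
/- For every real q > 1 and every real λ > 0, λ·∫_{−∞}^{∞} (q^{−t} − q^{−(t+1)})·exp(−(λ/q^t)·((q−1)/q)) dt = 1/ln q. Consequently the scale-invariance constant of smoothed base-q PCSA is κ_{q-PCSA} = 1/ln q. -/
open MeasureTheory Filter Topology in
theorem aux_12 (c L : ℝ) (hc : 0 < c) (hL : 0 < L) :
    ∫ t : ℝ, Real.exp (-(c * Real.exp (-(L * t)))) * (c * (Real.exp (-(L * t)) * L)) = 1 := by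
  have hd : ∀ x : ℝ, HasDerivAt (fun t : ℝ => Real.exp (-(c * Real.exp (-(L * t)))))
      (Real.exp (-(c * Real.exp (-(L * x)))) * (c * (Real.exp (-(L * x)) * L))) x := by
    intro x
    have h1 : HasDerivAt (fun t : ℝ => -(L * t)) (-(L * 1)) x :=
      ((hasDerivAt_id x).const_mul L).neg
    have h := ((h1.exp.const_mul c).neg).exp
    refine h.congr_deriv ?_
    simp only [Pi.neg_apply]
    ring
  have htop : Tendsto (fun t : ℝ => Real.exp (-(c * Real.exp (-(L * t))))) atTop (𝓝 1) := by
    have h1 : Tendsto (fun t : ℝ => Real.exp (-(L * t))) atTop (𝓝 0) :=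
      Real.tendsto_exp_neg_atTop_nhds_zero.comp (tendsto_id.const_mul_atTop hL)
    have h2 := (Real.continuous_exp.tendsto _).comp (h1.const_mul c).neg
    simpa [Function.comp_def] using h2
  have hbot : Tendsto (fun t : ℝ => Real.exp (-(c * Real.exp (-(L * t))))) atBot (𝓝 0) := by
    have h1 : Tendsto (fun t : ℝ => Real.exp (-(L * t))) atBot atTop :=
      Real.tendsto_exp_atTop.comp
        (tendsto_neg_atBot_atTop.comp (tendsto_id.const_mul_atBot hL))
    exact Real.tendsto_exp_neg_atTop_nhds_zero.comp (h1.const_mul_atTop hc)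
  have hi1 : IntegrableOn (fun x : ℝ => Real.exp (-(c * Real.exp (-(L * x)))) *
      (c * (Real.exp (-(L * x)) * L))) (Set.Ioi 0) :=
    integrableOn_Ioi_deriv_of_nonneg' (fun x _ => hd x) (fun x _ => by positivity) htop
  have hi2 : IntegrableOn (fun x : ℝ => Real.exp (-(c * Real.exp (-(L * x)))) *
      (c * (Real.exp (-(L * x)) * L))) (Set.Iic 0) := by
    have h : IntegrableOn (fun x : ℝ => Real.exp (-(c * Real.exp (-(L * -x)))) *
      (c * (Real.exp (-(L * -x)) * L))) (Set.Ioi 0) := by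
      refine integrableOn_Ioi_deriv_of_nonneg'
        (g := fun x => -Real.exp (-(c * Real.exp (-(L * -x))))) (fun x _ => ?_)
        (fun x _ => by positivity) (hbot.comp tendsto_neg_atTop_atBot).neg
      have := ((hd (-x)).scomp x (hasDerivAt_neg x)).neg
      refine this.congr_deriv ?_
      simp
    have h3 := (integrableOn_Ici_iff_integrableOn_Ioi (μ := volume)).mpr h
    have h4 := (Measure.measurePreserving_neg (volume : Measure ℝ)).integrableOn_comp_preimage
      (MeasurableEquiv.neg ℝ).measurableEmbedding (f := fun x : ℝ => Real.exp (-(c * Real.exp (-(L * x)))) *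
      (c * (Real.exp (-(L * x)) * L))) (s := Set.Iic 0)
    rw [← h4]
    simpa [Function.comp_def] using h3
  have hi := hi2.union hi1
  rw [Set.Iic_union_Ioi, integrableOn_univ] at hi
  have := integral_of_hasDerivAt_of_tendsto hd hi hbot htop
  simpa using this

/-- For `q > 1` and `λ > 0`:
`λ·∫_{−∞}^{∞} (q^{−t} − q^{−(t+1)})·exp(−(λ/q^t)·((q−1)/q)) dt = 1/ln q`,
i.e. the scale-invariance constant of smoothed base-`q` PCSA is `κ = 1/ln q`. -/
theorem stmt_12 (q lam : ℝ) (hq : 1 < q) (hlam : 0 < lam) :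
    lam * ∫ t : ℝ,
        (q ^ (-t) - q ^ (-(t + 1))) * Real.exp (-((lam / q ^ t) * ((q - 1) / q)))
      = 1 / Real.log q := by
  have hL : 0 < Real.log q := Real.log_pos hq
  have hq0 : 0 < q := by linarith
  have hq1 : 0 < q - 1 := by linarith
  have key := aux_12 (lam * ((q - 1) / q)) (Real.log q) (by positivity) hL
  have he : ∀ t : ℝ, Real.exp (-(Real.log q * t)) = (q ^ t)⁻¹ := by
    intro t
    rw [Real.exp_neg, Real.rpow_def_of_pos hq0]
  have hfun : (fun t : ℝ => (q ^ (-t) - q ^ (-(t + 1))) *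
      Real.exp (-((lam / q ^ t) * ((q - 1) / q)))) = fun t : ℝ => (1 / (lam * Real.log q)) *
      (Real.exp (-(lam * ((q - 1) / q) * Real.exp (-(Real.log q * t)))) *
        (lam * ((q - 1) / q) * (Real.exp (-(Real.log q * t)) * Real.log q))) := by
    funext t
    have hp : 0 < q ^ t := Real.rpow_pos_of_pos hq0 t
    rw [he, Real.rpow_neg hq0.le, Real.rpow_neg hq0.le, Real.rpow_add hq0, Real.rpow_one]
    have e1 : lam / q ^ t * ((q - 1) / q) = lam * ((q - 1) / q) * (q ^ t)⁻¹ := by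
      field_simp
    rw [e1]
    generalize Real.exp (-(lam * ((q - 1) / q) * (q ^ t)⁻¹)) = E
    field_simp
  rw [hfun, MeasureTheory.integral_const_mul, key]
  field_simp
end

section
/- Let q > 1 be real, a ≥ 1 and h ≥ 0, and set C = (q−1)/q + 2/(q^h(q^{a−1/2}−1)) + 1/q^{h+1}. Then for every real λ > 0, λ·∫_{−∞}^{∞} (q^{−t} − q^{−(t+1)})·exp(−(λ/q^t)·C) dt = (1/ln q)·((q−1)/q)·(1/C). Consequently the scale-invariance constant of the Curtain sketch with parameters (q,a,h) is κ_Curtain = ((q−1)/(q ln q))·(1/((q−1)/q + 2/(q^h(q^{a−1/2}−1)) + 1/q^{h+1})). -/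
open Filter Topology MeasureTheory in
theorem curtain_aux (q C lam : ℝ) (hq : 1 < q) (hC : 0 < C) (hlam : 0 < lam) :
    lam * ∫ t : ℝ, (q ^ (-t) - q ^ (-(t + 1))) * Real.exp (-((lam / q ^ t) * C))
      = (1 / Real.log q) * ((q - 1) / q) * (1 / C) := by
  have hq0 : 0 < q := by linarith
  have hL : 0 < Real.log q := Real.log_pos hq
  set K : ℝ := ((q - 1) / q) / (lam * C * Real.log q) with hK
  have hfun : ∀ t : ℝ, (q ^ (-t) - q ^ (-(t + 1))) * Real.exp (-((lam / q ^ t) * C))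
      = ((q - 1) / q) * (q ^ (-t) * Real.exp (-(lam * C * q ^ (-t)))) := by
    intro t
    have h1 : q ^ (-(t + 1)) = q ^ (-t) / q := by
      rw [neg_add, ← sub_eq_add_neg, Real.rpow_sub hq0, Real.rpow_one]
    have h2 : lam / q ^ t * C = lam * C * q ^ (-t) := by
      rw [Real.rpow_neg hq0.le]; ring
    rw [h1, h2]; field_simp
  have hderiv : ∀ t : ℝ, HasDerivAt (fun t : ℝ => K * Real.exp (-(lam * C * q ^ (-t))))
      (((q - 1) / q) * (q ^ (-t) * Real.exp (-(lam * C * q ^ (-t))))) t := by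
    intro t
    have h1 : HasDerivAt (fun t : ℝ => q ^ (-t)) (Real.log q * (-1) * q ^ (-t)) t :=
      (hasDerivAt_neg t).const_rpow hq0
    have h2 := (((h1.const_mul (lam * C)).neg).exp).const_mul K
    refine h2.congr_deriv ?_
    rw [hK]
    simp only [Pi.neg_apply]
    field_simp
  have hnn : ∀ t : ℝ, 0 ≤ ((q - 1) / q) * (q ^ (-t) * Real.exp (-(lam * C * q ^ (-t)))) := by
    intro t
    have : 0 ≤ q - 1 := by linarith
    positivity
  have hlC : 0 < lam * C := by positivity
  have htop : Tendsto (fun t : ℝ => K * Real.exp (-(lam * C * q ^ (-t)))) atTop (𝓝 K) := by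
    have h1 : Tendsto (fun t : ℝ => q ^ (-t)) atTop (𝓝 0) :=
      (tendsto_rpow_atBot_of_base_gt_one q hq).comp tendsto_neg_atTop_atBot
    have h2 := ((Real.continuous_exp.tendsto _).comp ((h1.const_mul (lam * C)).neg)).const_mul K
    simpa [Function.comp_def] using h2
  have hbot : Tendsto (fun t : ℝ => K * Real.exp (-(lam * C * q ^ (-t)))) atBot (𝓝 0) := by
    have h1 : Tendsto (fun t : ℝ => q ^ (-t)) atBot atTop :=
      (tendsto_rpow_atTop_of_base_gt_one q hq).comp tendsto_neg_atBot_atTop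
    have h2 := (Real.tendsto_exp_neg_atTop_nhds_zero.comp (h1.const_mul_atTop hlC)).const_mul K
    simpa [Function.comp_def] using h2
  have hint : Integrable (fun t : ℝ =>
      ((q - 1) / q) * (q ^ (-t) * Real.exp (-(lam * C * q ^ (-t))))) := by
    rw [← integrableOn_univ, ← Set.Iic_union_Ioi (a := (0 : ℝ)), integrableOn_union]
    have hneg : IntegrableOn (fun t : ℝ =>
        ((q - 1) / q) * (q ^ (-(-t)) * Real.exp (-(lam * C * q ^ (-(-t)))))) (Set.Ioi 0) := by
      refine integrableOn_Ioi_deriv_of_nonneg' (l := -0)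
        (g := fun t : ℝ => -(K * Real.exp (-(lam * C * q ^ (-(-t)))))) (fun t _ => ?_)
        (fun t _ => hnn (-t)) ((hbot.comp tendsto_neg_atTop_atBot).neg)
      have h3 := ((hderiv (-t)).comp t (hasDerivAt_neg t)).neg
      refine h3.congr_deriv ?_
      ring
    have hneg2 := (integrableOn_Ici_iff_integrableOn_Ioi).2 hneg
    have hIic : IntegrableOn (fun t : ℝ =>
        ((q - 1) / q) * (q ^ (-t) * Real.exp (-(lam * C * q ^ (-t))))) (Set.Iic 0) := by
      rw [← (Measure.measurePreserving_neg (volume : Measure ℝ)).integrableOn_comp_preimage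
        (Homeomorph.neg ℝ).measurableEmbedding]
      simpa [Function.comp_def] using hneg2
    exact ⟨hIic,
      integrableOn_Ioi_deriv_of_nonneg' (fun t _ => hderiv t) (fun t _ => hnn t) htop⟩
  simp_rw [hfun]
  rw [integral_of_hasDerivAt_of_tendsto hderiv hint hbot htop, hK]
  field_simp
  simp


/-- For `q > 1`, `a ≥ 1`, `h ≥ 0`, and `C = (q−1)/q + 2/(q^h(q^{a−1/2}−1)) + 1/q^{h+1}`:
`λ·∫_{−∞}^{∞} (q^{−t} − q^{−(t+1)})·exp(−(λ/q^t)·C) dt = (1/ln q)·((q−1)/q)·(1/C)`,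
i.e. the scale-invariance constant of the Curtain sketch with parameters `(q,a,h)` is
`κ = ((q−1)/(q ln q))·(1/C)`. -/
theorem stmt_14 (q a h lam : ℝ) (hq : 1 < q) (ha : 1 ≤ a) (hh : 0 ≤ h) (hlam : 0 < lam) :
    lam * ∫ t : ℝ,
        (q ^ (-t) - q ^ (-(t + 1))) *
          Real.exp (-((lam / q ^ t) *
            ((q - 1) / q + 2 / (q ^ h * (q ^ (a - 1/2) - 1)) + 1 / q ^ (h + 1))))
      = (1 / Real.log q) * ((q - 1) / q) *
          (1 / ((q - 1) / q + 2 / (q ^ h * (q ^ (a - 1/2) - 1)) + 1 / q ^ (h + 1))) := by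

  have hq0 : 0 < q := by linarith
  have h1 : 1 < q ^ (a - 1/2) := Real.one_lt_rpow hq (by linarith)
  have h2 : 0 < q ^ (a - 1/2) - 1 := by linarith
  have h3 : 0 < q - 1 := by linarith
  exact curtain_aux q _ lam hq (by positivity) hlam
end

section
/- The function t ↦ Ḣ(t)/Ṙ(t) is strictly decreasing on (0,∞), where Ḣ(t) = (1/ln 2)·(t·e^{−t} − (1−e^{−t})·ln(1−e^{−t})) and Ṙ(t) = 2t·e^{−t}. -/
lemma aux_slope {u v : ℝ} (hu : 0 < u) (huv : u < v) (hv : v < 1) :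
    -Real.log (1 - u) * v < -Real.log (1 - v) * u := by
  have h := strictConcaveOn_log_Ioi.slope_anti_adjacent (x := 1 - v) (y := 1 - u) (z := 1)
    (by simp only [Set.mem_Ioi]; linarith) (by simp) (by linarith) (by linarith)
  rw [div_lt_div_iff₀ (by linarith) (by linarith), Real.log_one] at h
  nlinarith [h]

/-- `Ḣ(t)/Ṙ(t)` is strictly decreasing on `(0,∞)`, where
`Ḣ(t) = (1/ln 2)·(t e^{−t} − (1−e^{−t}) ln(1−e^{−t}))` and `Ṙ(t) = 2t e^{−t}`. -/
theorem stmt_15 :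
    StrictAntiOn
      (fun t : ℝ =>
        ((1 / Real.log 2) *
            (t * Real.exp (-t) - (1 - Real.exp (-t)) * Real.log (1 - Real.exp (-t))))
          / (2 * t * Real.exp (-t)))
      (Set.Ioi 0) := by
  intro s hs t ht hst
  simp only [Set.mem_Ioi] at hs ht
  have hx1 : Real.exp (-s) < 1 := Real.exp_lt_one_iff.2 (by linarith)
  have hyx : Real.exp (-t) < Real.exp (-s) := Real.exp_lt_exp.2 (by linarith)
  have hy : 0 < Real.exp (-t) := Real.exp_pos _
  have h1 := aux_slope hy hyx hx1
  have h2 := aux_slope (u := 1 - Real.exp (-s)) (v := 1 - Real.exp (-t))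
    (by linarith) (by linarith) (by linarith)
  simp only [sub_sub_cancel, Real.log_exp, neg_neg] at h2
  have hb : 0 < -Real.log (1 - Real.exp (-t)) := by
    have := Real.log_neg (x := 1 - Real.exp (-t)) (by linarith) (by linarith)
    linarith
  have hL : 0 < Real.log 2 := Real.log_pos (by norm_num)
  simp only
  generalize Real.exp (-s) = x at *
  generalize Real.exp (-t) = y at *
  generalize Real.log (1 - x) = a at *
  generalize Real.log (1 - y) = b at *
  have hx : 0 < x := hy.trans hyx
  have h3 := mul_lt_mul'' h1 h2 (by positivity) (mul_nonneg hs.le (by linarith))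
  have key : ∀ r z c : ℝ, 0 < r → 0 < z → (1 / Real.log 2 * (r * z - (1 - z) * c)) / (2 * r * z)
      = 1 / (2 * Real.log 2) * (1 + ((1 - z) * -c) / (r * z)) := by
    intro r z c hr hz
    field_simp
    ring
  rw [key t y b ht hy, key s x a hs hx]
  have : ((1 - y) * -b) / (t * y) < ((1 - x) * -a) / (s * x) := by
    rw [div_lt_div_iff₀ (by positivity) (by positivity)]
    linarith
  gcongr
end
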